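/- Let f : ℝ/ℤ → [0,1] be a Borel function. Then liminf_{N→∞} ( log S_N^{(2)}(f) ) / ( −N·log 2 ) ≥ (1/log 2) · ∫₀¹ log( 2 / ( 1 + (2f(t)−1)² ) ) dt. In other words, the lower correlation dimension of the one-sided stationary determinantal measure μ_f^+ satisfies this lower bound. -/

import Mathlib

/-!
Put `g = 2f - 1`, `A = T_N(g)` and `λ₁, …, λ_N` for the eigenvalues of `A`. The weight of the
cylinder `ε` is `2⁻ᴺ det (1 + D(2ε - 1) A)`. Expanded in the principal minors `det A_s` of `A`, this
determinant is a Rademacher expansion in the signs `2ε - 1`, so Parseval's identity gives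
`S_N = 2⁻ᴺ ∑ₛ (det A_s)²`. Since `(det A_s)² ≤ det (A Aᴴ)_s`, it follows that
`S_N ≤ 2⁻ᴺ det (1 + A Aᴴ) = 2⁻ᴺ ∏ₖ (1 + λₖ²)`.

Each `λₖ` is the average of `g` against the probability density `|pₖ|²`, where the trigonometric
polynomial `pₖ` has a unit eigenvector as its coefficients, and `∑ₖ |pₖ|² = N` pointwise. As
`log (1 + x²)` is convex on `[-1, 1]`, Jensen's inequality gives
`∑ₖ log (1 + λₖ²) ≤ N ∫ log (1 + g²)`, hence `-log S_N ≥ N ∫ log (2 / (1 + g²))`.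
-/

open MeasureTheory Matrix Filter

/-- The `n`-th Fourier coefficient of a function on the circle `ℝ/ℤ`. -/
noncomputable def fhat (f : AddCircle (1:ℝ) → ℝ) (n : ℤ) : ℂ :=
  fourierCoeff (fun t => (f t : ℂ)) n

/-- A boolean seen as the complex number `0` or `1`. -/
def bc (b : Bool) : ℂ := if b then 1 else 0

/-- The `N×N` Toeplitz matrix `T_N(f) = (f̂(i-j))_{1 ≤ i,j ≤ N}`. -/
noncomputable def Tmat (f : AddCircle (1:ℝ) → ℝ) (N : ℕ) : Matrix (Fin N) (Fin N) ℂ :=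
  Matrix.of fun i j => fhat f (((i : ℕ) : ℤ) - ((j : ℕ) : ℤ))

/-- The cylinder weight `μ_f^+([ε]) = det(D_N(2ε-1)·T_N(f) + D_N(1-ε))`
(a real number, taken as the real part of the complex determinant). -/
noncomputable def cylWeight (f : AddCircle (1:ℝ) → ℝ) {N : ℕ} (ε : Fin N → Bool) : ℝ :=
  ((Matrix.diagonal (fun i => 2 * bc (ε i) - 1) * Tmat f N +
      Matrix.diagonal (fun i => 1 - bc (ε i))).det).re

/-- `S_N^{(q)}(f) = Σ_{ε ∈ {0,1}^N} det(D_N(2ε-1)·T_N(f) + D_N(1-ε))^q`. -/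
noncomputable def Sq (f : AddCircle (1:ℝ) → ℝ) (q N : ℕ) : ℝ :=
  ∑ ε : Fin N → Bool, (cylWeight f ε) ^ q

section PrincipalMinors

variable {n R : Type*} [DecidableEq n] [CommRing R]

/-- The principal minor of `M` with rows and columns in `s`. -/
def principalMinor (M : Matrix n n R) (s : Finset n) : R :=
  (M.submatrix (Subtype.val : s → n) Subtype.val).det

@[simp]
lemma principalMinor_empty (M : Matrix n n R) : principalMinor M ∅ = 1 :=
  det_isEmpty

variable [Fintype n]

lemma det_one_add_diagonal_mul (d : n → R) (M : Matrix n n R) :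
    (1 + diagonal d * M).det = ∑ s, (∏ i ∈ s, d i) * principalMinor M s := by
  have hrows : 1 + diagonal d * M = of ((fun i => d i • M.row i) + (1 : Matrix n n R).row) := by
    ext i j
    simp [diagonal_mul, add_comm]
  have hpiecewise (s : Finset n) :
      s.piecewise (fun i => d i • M.row i) (1 : Matrix n n R).row =
        fun i => (if i ∈ s then d i else 1) • s.piecewise M.row (1 : Matrix n n R).row i := by
    funext i
    by_cases hi : i ∈ s <;> simp [hi]
  rw [hrows]
  refine (detRowAlternating.map_add_univ _ _).trans (Finset.sum_congr rfl fun s _ => ?_)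
  rw [hpiecewise, AlternatingMap.map_smul_univ, Finset.prod_ite_mem, Finset.univ_inter, smul_eq_mul,
    principalMinor, ← det_piecewise_one_eq_submatrix_det]
  rfl

lemma det_one_add_eq_sum_principalMinor (M : Matrix n n R) :
    (1 + M).det = ∑ s, principalMinor M s := by
  simpa using det_one_add_diagonal_mul (fun _ => 1) M

end PrincipalMinors

section PosSemidef

open scoped ComplexOrder

variable {n 𝕜 : Type*} [Fintype n] [DecidableEq n] [RCLike 𝕜]

lemma one_le_det_one_add_of_posSemidef {Q : Matrix n n 𝕜} (hQ : Q.PosSemidef) :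
    1 ≤ (1 + Q).det := by
  rw [det_one_add_eq_sum_principalMinor, ← principalMinor_empty Q]
  exact Finset.single_le_sum (f := principalMinor Q) (fun s _ => (hQ.submatrix _).det_nonneg)
    (Finset.mem_univ ∅)

lemma det_mul_star_det_le_det_mul_conjTranspose_add (B : Matrix n n 𝕜) {Q : Matrix n n 𝕜}
    (hQ : Q.PosSemidef) : B.det * star B.det ≤ (B * Bᴴ + Q).det := by
  by_cases hB : B.det = 0
  · simpa [hB] using ((posSemidef_self_mul_conjTranspose B).add hQ).det_nonneg
  have hinv : B * B⁻¹ = 1 := mul_nonsing_inv _ (isUnit_iff_ne_zero.mpr hB)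
  have hinv' : (B⁻¹)ᴴ * Bᴴ = 1 := by rw [← conjTranspose_mul, hinv, conjTranspose_one]
  have hfactor : B * Bᴴ + Q = B * (1 + B⁻¹ * Q * (B⁻¹)ᴴ) * Bᴴ := by
    calc B * Bᴴ + Q = B * Bᴴ + (B * B⁻¹) * Q * ((B⁻¹)ᴴ * Bᴴ) := by simp [hinv, hinv']
      _ = B * (1 + B⁻¹ * Q * (B⁻¹)ᴴ) * Bᴴ := by noncomm_ring
  have hone := one_le_det_one_add_of_posSemidef (hQ.mul_mul_conjTranspose_same B⁻¹)
  rw [hfactor, det_mul, det_mul, det_conjTranspose, mul_right_comm]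
  exact le_mul_of_one_le_right (mul_star_self_nonneg _) hone

/-- By Cauchy–Binet, the right-hand side is the sum of the squared moduli of the maximal minors of
`A` with row set `s`. -/
lemma norm_principalMinor_sq_le (A : Matrix n n 𝕜) (s : Finset n) :
    ‖principalMinor A s‖ ^ 2 ≤ RCLike.re (principalMinor (A * Aᴴ) s) := by
  let B : Matrix s s 𝕜 := A.submatrix Subtype.val Subtype.val
  let C : Matrix s {i // i ∉ s} 𝕜 := A.submatrix Subtype.val Subtype.val
  have hsplit : (A * Aᴴ).submatrix Subtype.val Subtype.val = B * Bᴴ + C * Cᴴ := by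
    ext i j
    simp only [submatrix_apply, Matrix.add_apply, mul_apply]
    convert! (Fintype.sum_subtype_add_sum_subtype (· ∈ s) fun k => A i k * Aᴴ k j).symm
  have hle := det_mul_star_det_le_det_mul_conjTranspose_add B (posSemidef_self_mul_conjTranspose C)
  rw [← hsplit] at hle
  have := (RCLike.le_iff_re_im.mp hle).1
  rwa [RCLike.star_def, RCLike.mul_conj, ← RCLike.ofReal_pow, RCLike.ofReal_re] at this

lemma sum_re_principalMinor_sq_le (A : Matrix n n 𝕜) :
    ∑ s, RCLike.re (principalMinor A s) ^ 2 ≤ RCLike.re (1 + A * Aᴴ).det := by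
  rw [det_one_add_eq_sum_principalMinor, map_sum]
  gcongr with s
  calc RCLike.re (principalMinor A s) ^ 2 ≤ ‖principalMinor A s‖ ^ 2 :=
        sq_le_sq.mpr ((RCLike.abs_re_le_norm _).trans_eq (abs_norm _).symm)
    _ ≤ RCLike.re (principalMinor (A * Aᴴ) s) := norm_principalMinor_sq_le A s

lemma det_cfc {A : Matrix n n 𝕜} (hA : A.IsHermitian) (φ : ℝ → ℝ) :
    (cfc φ A).det = ((∏ i, φ (hA.eigenvalues i) : ℝ) : 𝕜) := by
  rw [hA.cfc_eq, IsHermitian.cfc, Unitary.conjStarAlgAut_apply, det_mul_right_comm]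
  simp [det_diagonal]

lemma det_one_add_mul_conjTranspose_eq_prod {A : Matrix n n 𝕜} (hA : A.IsHermitian) :
    (1 + A * Aᴴ).det = ((∏ i, (1 + hA.eigenvalues i ^ 2) : ℝ) : 𝕜) := by
  have hsa : IsSelfAdjoint A := hA
  rw [← det_cfc hA fun x => 1 + x ^ 2, cfc_const_add 1 (fun x : ℝ => x ^ 2) A, cfc_pow_id A 2,
    hA.eq, map_one, sq]

end PosSemidef

section Rademacher

variable {ι κ R : Type*} [Fintype ι] [DecidableEq ι] [Fintype κ] [CommSemiring R] {σ : κ → R}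

lemma sum_prod_mul_prod (hσ : ∑ b, σ b = 0) (hσ_sq : ∑ b, σ b ^ 2 = Fintype.card κ)
    (s t : Finset ι) :
    ∑ ε : ι → κ, (∏ i ∈ s, σ (ε i)) * ∏ i ∈ t, σ (ε i) =
      if s = t then (Fintype.card κ : R) ^ Fintype.card ι else 0 := by
  let τ (i : ι) (b : κ) : R := (if i ∈ s then σ b else 1) * if i ∈ t then σ b else 1
  have hτ (ε : ι → κ) : (∏ i ∈ s, σ (ε i)) * ∏ i ∈ t, σ (ε i) = ∏ i, τ i (ε i) := by
    rw [Finset.prod_mul_distrib]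
    simp [Finset.prod_ite_mem]
  simp_rw [hτ, ← Fintype.prod_sum]
  split_ifs with hst
  · subst hst
    have hfactor (i : ι) : ∑ b, τ i b = Fintype.card κ := by
      by_cases hi : i ∈ s <;> simp [τ, hi, ← sq, hσ_sq]
    simp [hfactor]
  · obtain ⟨i, hi⟩ : ∃ i, ¬(i ∈ s ↔ i ∈ t) := by
      contrapose! hst
      exact Finset.ext hst
    refine Finset.prod_eq_zero (Finset.mem_univ i) ?_
    by_cases his : i ∈ s <;> simp_all [τ]

lemma sum_sq_sum_prod_mul (hσ : ∑ b, σ b = 0) (hσ_sq : ∑ b, σ b ^ 2 = Fintype.card κ)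
    (c : Finset ι → R) :
    ∑ ε : ι → κ, (∑ s, (∏ i ∈ s, σ (ε i)) * c s) ^ 2 =
      (Fintype.card κ : R) ^ Fintype.card ι * ∑ s, c s ^ 2 := by
  calc ∑ ε : ι → κ, (∑ s, (∏ i ∈ s, σ (ε i)) * c s) ^ 2
      = ∑ ε : ι → κ, ∑ s, ∑ t,
          ((∏ i ∈ s, σ (ε i)) * ∏ i ∈ t, σ (ε i)) * (c s * c t) := by
        simp_rw [sq, Finset.sum_mul_sum, mul_mul_mul_comm]
    _ = ∑ s, ∑ t, (∑ ε : ι → κ, (∏ i ∈ s, σ (ε i)) * ∏ i ∈ t, σ (ε i)) * (c s * c t) := by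
        simp_rw [Finset.sum_mul]
        rw [Finset.sum_comm]
        exact Finset.sum_congr rfl fun s _ => Finset.sum_comm
    _ = (Fintype.card κ : R) ^ Fintype.card ι * ∑ s, c s ^ 2 := by
        simp [sum_prod_mul_prod hσ hσ_sq, Finset.mul_sum, sq]

end Rademacher

section Toeplitz

open scoped NNReal

variable {N : ℕ} {g : UnitAddCircle → ℝ}

lemma haarAddCircle_eq_volume :
    (AddCircle.haarAddCircle : Measure UnitAddCircle) = volume := by
  simp [AddCircle.volume_eq_smul_haarAddCircle]

lemma isProbabilityMeasure_volume_unitAddCircle :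
    IsProbabilityMeasure (volume : Measure UnitAddCircle) :=
  haarAddCircle_eq_volume ▸ inferInstance

lemma fhat_eq_integral (g : UnitAddCircle → ℝ) (n : ℤ) :
    fhat g n = ∫ t, fourier (-n) t * (g t : ℂ) := by
  simp_rw [fhat, fourierCoeff, haarAddCircle_eq_volume, smul_eq_mul]

lemma fhat_const (c : ℝ) (n : ℤ) : fhat (fun _ => c) n = if n = 0 then (c : ℂ) else 0 := by
  have hcoeff := fourierCoeff.const_mul (fourier 0 : C(UnitAddCircle, ℂ)) (c : ℂ) n
  simp only [fourier_zero, mul_one] at hcoeff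
  rw [fhat, hcoeff, fourierCoeff_fourier, Pi.single_apply, mul_ite, mul_one, mul_zero]

lemma fhat_const_mul (c : ℝ) (g : UnitAddCircle → ℝ) (n : ℤ) :
    fhat (fun t => c * g t) n = c * fhat g n := by
  simp_rw [fhat, Complex.ofReal_mul, fourierCoeff.const_mul]

lemma integrable_fourier_mul_ofReal (hg : Integrable g) (n : ℤ) :
    Integrable fun t => fourier n t * (g t : ℂ) := by
  have hg' : Integrable (fun t => (g t : ℂ)) AddCircle.haarAddCircle :=
    haarAddCircle_eq_volume ▸ hg.ofReal
  simpa only [haarAddCircle_eq_volume, smul_eq_mul] using hg'.fourier_smul n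

lemma fhat_sub {h : UnitAddCircle → ℝ} (hg : Integrable g) (hh : Integrable h) (n : ℤ) :
    fhat (fun t => g t - h t) n = fhat g n - fhat h n := by
  simp_rw [fhat_eq_integral, Complex.ofReal_sub, mul_sub]
  exact integral_sub (integrable_fourier_mul_ofReal hg _) (integrable_fourier_mul_ofReal hh _)

lemma fhat_neg (g : UnitAddCircle → ℝ) (n : ℤ) : fhat g (-n) = star (fhat g n) := by
  simp_rw [fhat_eq_integral, Complex.star_def, ← integral_conj, map_mul, Complex.conj_ofReal,
    ← fourier_neg]

lemma isHermitian_Tmat (g : UnitAddCircle → ℝ) (N : ℕ) : (Tmat g N).IsHermitian := by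
  ext i j
  simp only [Tmat, conjTranspose_apply, of_apply, ← fhat_neg, neg_sub]

lemma Tmat_one (N : ℕ) : Tmat (fun _ => 1) N = 1 := by
  ext i j
  simp [Tmat, fhat_const, one_apply, sub_eq_zero, Fin.val_inj]

lemma Tmat_two_mul_sub_one (hg : Integrable g) (N : ℕ) :
    Tmat (fun t => 2 * g t - 1) N = (2 : ℂ) • Tmat g N - 1 := by
  rw [← Tmat_one]
  ext i j
  simp [Tmat, fhat_sub (hg.const_mul 2) (integrable_const 1), fhat_const_mul]

/-- The trigonometric polynomial `∑ j, u j e^{2πijt}` with coefficients `u`; the quadratic form of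
`Tmat g N` is the integral of `g` against its squared modulus. -/
noncomputable def trigPoly (u : Fin N → ℂ) (t : UnitAddCircle) : ℂ :=
  ∑ j, u j * fourier j t

lemma continuous_trigPoly (u : Fin N → ℂ) : Continuous (trigPoly u) := by
  unfold trigPoly
  fun_prop

lemma norm_trigPoly_sq (u : Fin N → ℂ) (t : UnitAddCircle) :
    (‖trigPoly u t‖ ^ 2 : ℂ) =
      ∑ i : Fin N, ∑ j : Fin N, star (u i) * fourier (-((i : ℤ) - j)) t * u j := by
  rw [← Complex.conj_mul', trigPoly, map_sum, Finset.sum_mul_sum]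
  refine Finset.sum_congr rfl fun i _ => Finset.sum_congr rfl fun j _ => ?_
  rw [neg_sub, sub_eq_add_neg, fourier_add, fourier_neg, map_mul, Complex.star_def]
  ring

/-- The measure `|p(t)|² dt` on the circle, where `p` is the trigonometric polynomial with
coefficients `u`. -/
noncomputable def trigPolyMeasure (u : Fin N → ℂ) : Measure UnitAddCircle :=
  volume.withDensity fun t => (‖trigPoly u t‖₊ ^ 2 : ℝ≥0)

lemma measurable_nnnorm_trigPoly_sq (u : Fin N → ℂ) :
    Measurable fun t => ‖trigPoly u t‖₊ ^ 2 :=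
  ((continuous_trigPoly u).nnnorm.pow 2).measurable

lemma integral_trigPolyMeasure (u : Fin N → ℂ) (g : UnitAddCircle → ℝ) :
    ∫ t, g t ∂trigPolyMeasure u = ∫ t, ‖trigPoly u t‖ ^ 2 * g t := by
  rw [trigPolyMeasure, integral_withDensity_eq_integral_smul (measurable_nnnorm_trigPoly_sq u)]
  simp [NNReal.smul_def]

lemma integrable_norm_trigPoly_sq_mul (u : Fin N → ℂ) (hg : Integrable g) :
    Integrable fun t => ‖trigPoly u t‖ ^ 2 * g t := by
  have hcont : Continuous fun t => ‖trigPoly u t‖ ^ 2 := (continuous_trigPoly u).norm.pow 2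
  obtain ⟨C, hC⟩ := isCompact_univ.exists_bound_of_continuousOn hcont.continuousOn
  exact hg.bdd_mul hcont.aestronglyMeasurable (.of_forall fun t => hC t (Set.mem_univ t))

lemma integrable_trigPolyMeasure (u : Fin N → ℂ) (hg : Integrable g) :
    Integrable g (trigPolyMeasure u) := by
  rw [trigPolyMeasure,
    integrable_withDensity_iff_integrable_smul (measurable_nnnorm_trigPoly_sq u)]
  simpa [NNReal.smul_def] using integrable_norm_trigPoly_sq_mul u hg

lemma star_dotProduct_Tmat_mulVec (u : Fin N → ℂ) (hg : Integrable g) :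
    star u ⬝ᵥ (Tmat g N *ᵥ u) = ((∫ t, g t ∂trigPolyMeasure u : ℝ) : ℂ) := by
  have hterm (i j : Fin N) : Integrable fun t =>
      star (u i) * (fourier (-((i : ℤ) - j)) t * (g t : ℂ)) * u j :=
    ((integrable_fourier_mul_ofReal hg _).const_mul _).mul_const _
  have hexpand (t : UnitAddCircle) : ((‖trigPoly u t‖ ^ 2 * g t : ℝ) : ℂ) =
      ∑ i : Fin N, ∑ j : Fin N, star (u i) * (fourier (-((i : ℤ) - j)) t * (g t : ℂ)) * u j := by
    push_cast
    simp_rw [norm_trigPoly_sq, Finset.sum_mul, mul_assoc, mul_comm (u _) (g t : ℂ)]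
  simp_rw [integral_trigPolyMeasure, ← integral_complex_ofReal, hexpand]
  rw [integral_finsetSum _ fun i _ => integrable_finsetSum _ fun j _ => hterm i j]
  simp only [dotProduct, mulVec, Finset.mul_sum]
  refine Finset.sum_congr rfl fun i _ => ?_
  rw [integral_finsetSum _ fun j _ => hterm i j]
  refine Finset.sum_congr rfl fun j _ => ?_
  rw [integral_mul_const, integral_const_mul, ← fhat_eq_integral, mul_assoc]
  rfl

lemma isProbabilityMeasure_trigPolyMeasure (u : EuclideanSpace ℂ (Fin N)) (hu : ‖u‖ = 1) :
    IsProbabilityMeasure (trigPolyMeasure u) := by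
  have hform := star_dotProduct_Tmat_mulVec u (integrable_const 1)
  rw [Tmat_one, one_mulVec, dotProduct_comm, ← EuclideanSpace.inner_eq_star_dotProduct,
    inner_self_eq_one_of_norm_eq_one hu, integral_const, smul_eq_mul, mul_one] at hform
  exact isProbabilityMeasure_iff_real.mpr (by exact_mod_cast hform.symm)

lemma sum_norm_trigPoly_sq {ι : Type*} [Fintype ι]
    (b : OrthonormalBasis ι ℂ (EuclideanSpace ℂ (Fin N))) (t : UnitAddCircle) :
    ∑ k, ‖trigPoly (b k) t‖ ^ 2 = N := by
  let v : EuclideanSpace ℂ (Fin N) := WithLp.toLp 2 fun j => star (fourier j t : ℂ)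
  have hinner (k : ι) : inner ℂ v (b k) = trigPoly (b k) t := by
    simp [v, trigPoly, PiLp.inner_apply]
  have hnorm : ‖v‖ ^ 2 = N := by
    simp [v, EuclideanSpace.norm_sq_eq, fourier_apply, -natCast_zsmul, Circle.norm_coe]
  simp_rw [← hinner, b.sum_sq_norm_inner_left, hnorm]

lemma sum_integral_trigPolyMeasure {ι : Type*} [Fintype ι]
    (b : OrthonormalBasis ι ℂ (EuclideanSpace ℂ (Fin N))) (hg : Integrable g) :
    ∑ k, ∫ t, g t ∂trigPolyMeasure (b k) = N * ∫ t, g t := by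
  simp_rw [integral_trigPolyMeasure]
  rw [← integral_finsetSum _ fun k _ => integrable_norm_trigPoly_sq_mul _ hg]
  simp_rw [← Finset.sum_mul, sum_norm_trigPoly_sq, integral_const_mul]

lemma eigenvalues_Tmat_eq_integral (hg : Integrable g) (k : Fin N) :
    (isHermitian_Tmat g N).eigenvalues k =
      ∫ t, g t ∂trigPolyMeasure ((isHermitian_Tmat g N).eigenvectorBasis k) := by
  rw [IsHermitian.eigenvalues_eq, star_dotProduct_Tmat_mulVec _ hg, RCLike.re_eq_complex_re,
    Complex.ofReal_re]

/-- The Berezin inequality. -/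
theorem sum_convexOn_eigenvalues_Tmat_le {s : Set ℝ} {φ : ℝ → ℝ} (hφ : ConvexOn ℝ s φ)
    (hφc : ContinuousOn φ s) (hs : IsClosed s) (hgs : ∀ᵐ t, g t ∈ s) (hg : Integrable g)
    (hφg : Integrable (φ ∘ g)) (N : ℕ) :
    ∑ k, φ ((isHermitian_Tmat g N).eigenvalues k) ≤ N * ∫ t, φ (g t) := by
  set b := (isHermitian_Tmat g N).eigenvectorBasis
  have hjensen (k : Fin N) : φ ((isHermitian_Tmat g N).eigenvalues k) ≤
      ∫ t, φ (g t) ∂trigPolyMeasure (b k) := by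
    have := isProbabilityMeasure_trigPolyMeasure (b k) (b.norm_eq_one k)
    rw [eigenvalues_Tmat_eq_integral hg]
    exact hφ.map_integral_le hφc hs ((withDensity_absolutelyContinuous _ _).ae_le hgs)
      (integrable_trigPolyMeasure _ hg) (integrable_trigPolyMeasure _ hφg)
  calc ∑ k, φ ((isHermitian_Tmat g N).eigenvalues k)
      ≤ ∑ k, ∫ t, φ (g t) ∂trigPolyMeasure (b k) := Finset.sum_le_sum fun k _ => hjensen k
    _ = N * ∫ t, φ (g t) := sum_integral_trigPolyMeasure b hφg

end Toeplitz

section CylinderWeight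

/-- The sign `2ε - 1 ∈ {-1, 1}` of a boolean `ε`, by which the cylinder weights are Rademacher
expansions. -/
def boolSign (b : Bool) : ℝ := if b then 1 else -1

lemma boolSign_eq_two_mul_bc_sub_one (b : Bool) : (boolSign b : ℂ) = 2 * bc b - 1 := by
  cases b <;> norm_num [boolSign, bc]

lemma sum_sq_re_det_one_add_diagonal_boolSign_mul {n : Type*} [Fintype n] [DecidableEq n]
    (M : Matrix n n ℂ) :
    ∑ ε : n → Bool, (1 + diagonal (fun i => (boolSign (ε i) : ℂ)) * M).det.re ^ 2 =
      2 ^ Fintype.card n * ∑ s, (principalMinor M s).re ^ 2 := by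
  have hsum : ∑ b, boolSign b = 0 := by simp [boolSign]
  have hsum_sq : ∑ b, boolSign b ^ 2 = Fintype.card Bool := by norm_num [boolSign]
  simp_rw [det_one_add_diagonal_mul, Complex.re_sum, ← Complex.ofReal_prod, Complex.re_ofReal_mul,
    sum_sq_sum_prod_mul hsum hsum_sq, Fintype.card_bool, Nat.cast_ofNat]

lemma cylWeight_eq (f : UnitAddCircle → ℝ) {N : ℕ} (ε : Fin N → Bool) :
    cylWeight f ε = 2⁻¹ ^ N *
      (1 + diagonal (fun i => (boolSign (ε i) : ℂ)) * ((2 : ℂ) • Tmat f N - 1)).det.re := by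
  have hmatrix : diagonal (fun i => 2 * bc (ε i) - 1) * Tmat f N +
      diagonal (fun i => 1 - bc (ε i)) =
      ((2⁻¹ : ℝ) : ℂ) •
        (1 + diagonal (fun i => (boolSign (ε i) : ℂ)) * ((2 : ℂ) • Tmat f N - 1)) := by
    ext i j
    obtain rfl | hij := eq_or_ne i j
    · simp [diagonal_mul, boolSign_eq_two_mul_bc_sub_one]
      ring
    · simp [diagonal_mul, boolSign_eq_two_mul_bc_sub_one, hij]
      ring
  rw [cylWeight, hmatrix, det_smul, Fintype.card_fin, ← Complex.ofReal_pow, Complex.re_ofReal_mul]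

lemma Sq_two_eq (f : UnitAddCircle → ℝ) (N : ℕ) :
    Sq f 2 N = 2⁻¹ ^ N * ∑ s, (principalMinor ((2 : ℂ) • Tmat f N - 1) s).re ^ 2 := by
  simp_rw [Sq, cylWeight_eq, mul_pow _ _ 2, ← Finset.mul_sum,
    sum_sq_re_det_one_add_diagonal_boolSign_mul, Fintype.card_fin, ← mul_assoc]
  congr 1
  rw [sq, mul_assoc, ← mul_pow, inv_mul_cancel₀ two_ne_zero, one_pow, mul_one]

lemma inv_two_pow_le_Sq_two (f : UnitAddCircle → ℝ) (N : ℕ) : 2⁻¹ ^ N ≤ Sq f 2 N := by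
  rw [Sq_two_eq]
  refine le_mul_of_one_le_right (by positivity) ?_
  have hempty := Finset.single_le_sum
    (f := fun s => (principalMinor ((2 : ℂ) • Tmat f N - 1) s).re ^ 2)
    (fun s _ => sq_nonneg _) (Finset.mem_univ ∅)
  simpa only [principalMinor_empty, Complex.one_re, one_pow] using hempty

lemma Sq_two_le {f : UnitAddCircle → ℝ} (hf : Integrable f) (N : ℕ) :
    Sq f 2 N ≤ 2⁻¹ ^ N *
      ∏ k, (1 + (isHermitian_Tmat (fun t => 2 * f t - 1) N).eigenvalues k ^ 2) := by
  rw [Sq_two_eq, ← Tmat_two_mul_sub_one hf]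
  gcongr
  have hle := sum_re_principalMinor_sq_le (Tmat (fun t => 2 * f t - 1) N)
  rwa [det_one_add_mul_conjTranspose_eq_prod (isHermitian_Tmat _ N), RCLike.ofReal_re] at hle

end CylinderWeight

section LogOneAddSq

lemma convexOn_log_one_add_sq : ConvexOn ℝ (Set.Icc (-1) 1) fun x : ℝ => Real.log (1 + x ^ 2) := by
  have hderiv (x : ℝ) :
      HasDerivAt (fun x : ℝ => Real.log (1 + x ^ 2)) (2 * x / (1 + x ^ 2)) x := by
    have hsq : HasDerivAt (fun x : ℝ => 1 + x ^ 2) (2 * x) x := by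
      simpa using (hasDerivAt_pow 2 x).const_add 1
    exact hsq.log (by positivity)
  refine MonotoneOn.convexOn_of_deriv (convex_Icc _ _)
    (fun x _ => (hderiv x).continuousAt.continuousWithinAt)
    (fun x _ => (hderiv x).differentiableAt.differentiableWithinAt) fun x hx y hy hxy => ?_
  rw [interior_Icc] at hx hy
  rw [(hderiv x).deriv, (hderiv y).deriv, div_le_div_iff₀ (by positivity) (by positivity)]
  have hmul : 0 ≤ 1 - x * y := by nlinarith [hx.1, hx.2, hy.1, hy.2]
  linear_combination 2 * mul_nonneg (sub_nonneg.mpr hxy) hmul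

lemma log_one_add_sq_le_two_mul_abs (x : ℝ) : Real.log (1 + x ^ 2) ≤ 2 * |x| := by
  calc Real.log (1 + x ^ 2) ≤ Real.log ((1 + |x|) ^ 2) := by
        gcongr
        nlinarith [abs_nonneg x, sq_abs x]
    _ = 2 * Real.log (1 + |x|) := by rw [Real.log_pow, Nat.cast_ofNat]
    _ ≤ 2 * |x| := by
        gcongr
        linarith [Real.log_le_sub_one_of_pos (show 0 < 1 + |x| by positivity)]

lemma integrable_log_one_add_sq {α : Type*} {m : MeasurableSpace α} {μ : Measure α} {g : α → ℝ}
    (hg : Integrable g μ) : Integrable (fun t => Real.log (1 + g t ^ 2)) μ := by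
  refine (hg.abs.const_mul 2).mono'
    (((hg.aemeasurable.pow_const 2).const_add 1).log.aestronglyMeasurable) (.of_forall fun t => ?_)
  rw [Real.norm_of_nonneg (Real.log_nonneg (by linarith [sq_nonneg (g t)]))]
  exact log_one_add_sq_le_two_mul_abs (g t)

lemma integral_log_two_div_one_add_sq {α : Type*} {m : MeasurableSpace α} {μ : Measure α}
    [IsProbabilityMeasure μ] {g : α → ℝ} (hg : Integrable g μ) :
    ∫ t, Real.log (2 / (1 + g t ^ 2)) ∂μ = Real.log 2 - ∫ t, Real.log (1 + g t ^ 2) ∂μ := by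
  have hlog (t : α) : Real.log (2 / (1 + g t ^ 2)) = Real.log 2 - Real.log (1 + g t ^ 2) :=
    Real.log_div two_ne_zero (by positivity)
  simp_rw [hlog]
  rw [integral_sub (integrable_const _) (integrable_log_one_add_sq hg)]
  simp

end LogOneAddSq

section CorrelationDimension

variable {f : UnitAddCircle → ℝ}

lemma sum_log_one_add_eigenvalues_sq_le {g : UnitAddCircle → ℝ} (hg : AEMeasurable g)
    (hgs : ∀ᵐ t, g t ∈ Set.Icc (-1) 1) (N : ℕ) :
    ∑ k, Real.log (1 + (isHermitian_Tmat g N).eigenvalues k ^ 2) ≤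
      N * ∫ t, Real.log (1 + g t ^ 2) := by
  have hgi : Integrable g := .of_mem_Icc _ _ hg hgs
  have hcont : Continuous fun x : ℝ => Real.log (1 + x ^ 2) :=
    Continuous.log (by fun_prop) fun x => by positivity
  exact sum_convexOn_eigenvalues_Tmat_le convexOn_log_one_add_sq hcont.continuousOn isClosed_Icc
    hgs hgi (integrable_log_one_add_sq hgi) N

lemma log_Sq_two_le (hf : AEMeasurable f) (hf01 : ∀ᵐ t, f t ∈ Set.Icc 0 1) (N : ℕ) :
    Real.log (Sq f 2 N) ≤ -(N * ∫ t, Real.log (2 / (1 + (2 * f t - 1) ^ 2))) := by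
  have hfi : Integrable f := .of_mem_Icc 0 1 hf hf01
  have hgi : Integrable fun t => 2 * f t - 1 := (hfi.const_mul 2).sub (integrable_const 1)
  have hgs : ∀ᵐ t, 2 * f t - 1 ∈ Set.Icc (-1) 1 := by
    filter_upwards [hf01] with t ht
    constructor <;> linarith [ht.1, ht.2]
  have hpos : 0 < Sq f 2 N := lt_of_lt_of_le (by positivity) (inv_two_pow_le_Sq_two f N)
  set eig := (isHermitian_Tmat (fun t => 2 * f t - 1) N).eigenvalues
  calc Real.log (Sq f 2 N) ≤ Real.log (2⁻¹ ^ N * ∏ k, (1 + eig k ^ 2)) :=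
        Real.log_le_log hpos (Sq_two_le hfi N)
    _ = -(N * Real.log 2) + ∑ k, Real.log (1 + eig k ^ 2) := by
        rw [Real.log_mul (by positivity) (Finset.prod_ne_zero_iff.mpr fun k _ => by positivity),
          Real.log_prod fun k _ => by positivity, Real.log_pow, Real.log_inv, mul_neg]
    _ ≤ -(N * Real.log 2) + N * ∫ t, Real.log (1 + (2 * f t - 1) ^ 2) := by
        gcongr
        exact sum_log_one_add_eigenvalues_sq_le hgi.aemeasurable hgs N
    _ = -(N * ∫ t, Real.log (2 / (1 + (2 * f t - 1) ^ 2))) := by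
        have := isProbabilityMeasure_volume_unitAddCircle
        rw [integral_log_two_div_one_add_sq hgi]
        ring

lemma log_Sq_two_div_le_one (f : UnitAddCircle → ℝ) (N : ℕ) :
    Real.log (Sq f 2 N) / (-(N : ℝ) * Real.log 2) ≤ 1 := by
  have hlog := Real.log_le_log (by positivity) (inv_two_pow_le_Sq_two f N)
  rw [Real.log_pow, Real.log_inv] at hlog
  rw [neg_mul, div_neg, ← neg_div]
  exact div_le_one_of_le₀ (by linarith) (by positivity)

lemma le_log_Sq_two_div (hf : AEMeasurable f) (hf01 : ∀ᵐ t, f t ∈ Set.Icc 0 1) {N : ℕ}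
    (hN : 0 < N) :
    (1 / Real.log 2) * ∫ t, Real.log (2 / (1 + (2 * f t - 1) ^ 2)) ≤
      Real.log (Sq f 2 N) / (-(N : ℝ) * Real.log 2) := by
  rw [neg_mul, div_neg, ← neg_div, le_div_iff₀ (by positivity)]
  refine le_neg.mp ((log_Sq_two_le hf hf01 N).trans_eq ?_)
  field_simp

end CorrelationDimension

/-- Lower bound for the lower correlation dimension of `μ_f^+`:
`liminf_N log S_N^{(2)}(f) / (-N log 2) ≥ (1/log 2)·∫₀¹ log(2/(1+(2f(t)-1)²)) dt`. -/
theorem lower_correlation_dimension_bound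
    (f : AddCircle (1:ℝ) → ℝ) (hmeas : Measurable f)
    (h0 : ∀ t, 0 ≤ f t) (h1 : ∀ t, f t ≤ 1) :
    (1 / Real.log 2) *
        ∫ t : AddCircle (1:ℝ), Real.log (2 / (1 + (2 * f t - 1) ^ 2)) ≤
      liminf (fun N : ℕ => Real.log (Sq f 2 N) / (-(N : ℝ) * Real.log 2)) atTop := by
  have hf01 : ∀ᵐ t, f t ∈ Set.Icc 0 1 := .of_forall fun t => ⟨h0 t, h1 t⟩
  refine le_liminf_of_le (.of_frequently_le (.of_forall (log_Sq_two_div_le_one f))) ?_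
  filter_upwards [eventually_gt_atTop 0] with N hN
  exact le_log_Sq_two_div hmeas.aemeasurable hf01 hN
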